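/- Let f : [0,t*]×[0,∞) → ℝ be continuous and bounded, a > 0, and G the half-line Dirichlet heat Green's function. Then w(t,y) = ∫₀^t ∫₀^∞ f(τ,ξ) G(y,ξ,a(t−τ)) dξ dτ is 1/2-Hölder in time: |w(t,y) − w(s,y)| ≤ C(a,t*)‖f‖_∞ |t−s|^{1/2} for 0 < s < t ≤ t*. -/

import Mathlib

open MeasureTheory Real Set

/-- The 1D heat kernel `Φ(z,s) = (4πs)^{-1/2} exp(−z²/(4s))`. -/
noncomputable def Phi (z s : ℝ) : ℝ := (1 / Real.sqrt (4 * π * s)) * Real.exp (-z ^ 2 / (4 * s))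

/-- The half-line Dirichlet Green's function `G(y,ξ,s) = Φ(y−ξ,s) − Φ(y+ξ,s)`. -/
noncomputable def Gker (y ξ s : ℝ) : ℝ := Phi (y - ξ) s - Phi (y + ξ) s

/-!
Reflecting across the boundary turns the `L¹` norm of `Φ(y - ·) - Φ(y + ·)` on the half line into
(at most) an `L¹` norm on the whole line, so everything reduces to two facts about the heat kernel:
it has mass one, and `‖Φ(·, σ₂) - Φ(·, σ₁)‖₁ ≤ 2 √((σ₂ - σ₁) / σ₂)` for `0 < σ₁ ≤ σ₂`.

Split `w(t, y) - w(s, y)` at time `s`. On `(s, t)` the mass bound contributes `M (t - s)`. On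
`(0, s)` the times `a (t - τ)` and `a (s - τ)` have relative distance `(t - s) / (t - τ)`, which
does not involve `a`, and integrating `2 M √((t - s) / (t - τ))` contributes
`4 M √(t - s) (√t - √(t - s))`.
-/

/-- The Dirichlet heat semigroup on the half line: the value at the point `y` and time `σ` of the
heat flow with initial datum `g`. -/
noncomputable def dirichletHeat (g : ℝ → ℝ) (σ y : ℝ) : ℝ :=
  ∫ ξ in Ioi (0 : ℝ), g ξ * Gker y ξ σ

/-- Duhamel's integral with diffusivity `a` and source `f`, which is the function `w` of the
paper. -/
noncomputable def duhamel (a : ℝ) (f : ℝ × ℝ → ℝ) (t y : ℝ) : ℝ :=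
  ∫ τ in Ioc (0 : ℝ) t, dirichletHeat (fun ξ => f (τ, ξ)) (a * (t - τ)) y

section HeatKernel

variable {s σ₁ σ₂ : ℝ}

lemma Phi_eq_gaussianPDFReal (hs : 0 ≤ s) :
    (fun z => Phi z s) = ProbabilityTheory.gaussianPDFReal 0 (2 * s).toNNReal := by
  funext z
  have hvariance : ((2 * s).toNNReal : ℝ) = 2 * s := Real.coe_toNNReal _ (by positivity)
  rw [Phi, ProbabilityTheory.gaussianPDFReal, hvariance]
  ring_nf

lemma Phi_nonneg (z s : ℝ) : 0 ≤ Phi z s := by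
  unfold Phi
  positivity

lemma integrable_Phi (hs : 0 ≤ s) : Integrable fun z => Phi z s :=
  Phi_eq_gaussianPDFReal hs ▸ ProbabilityTheory.integrable_gaussianPDFReal _ _

lemma integral_Phi (hs : 0 < s) : ∫ z, Phi z s = 1 := by
  rw [Phi_eq_gaussianPDFReal hs.le]
  exact ProbabilityTheory.integral_gaussianPDFReal_eq_one 0
    (Real.toNNReal_pos.2 (by positivity)).ne'

lemma sqrt_div_mul_Phi_le_Phi (h₁ : 0 < σ₁) (h₁₂ : σ₁ ≤ σ₂) (z : ℝ) :
    √(σ₁ / σ₂) * Phi z σ₁ ≤ Phi z σ₂ := by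
  have h₂ : 0 < σ₂ := h₁.trans_le h₁₂
  have hnorm : √(σ₁ / σ₂) * (1 / √(4 * π * σ₁)) = 1 / √(4 * π * σ₂) := by
    rw [Real.sqrt_div h₁.le, Real.sqrt_mul (by positivity) σ₁, Real.sqrt_mul (by positivity) σ₂]
    field_simp
  rw [Phi, Phi, ← mul_assoc, hnorm, neg_div, neg_div]
  gcongr

lemma one_sub_sqrt_le_sqrt_one_sub {x : ℝ} (h₀ : 0 ≤ x) (h₁ : x ≤ 1) : 1 - √x ≤ √(1 - x) :=
  calc 1 - √x ≤ 1 - x := sub_le_sub_left (Real.le_sqrt_self_iff.2 h₁) 1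
    _ ≤ √(1 - x) := Real.le_sqrt_self_iff.2 (sub_le_self 1 h₀)

lemma integral_abs_Phi_sub_le (h₁ : 0 < σ₁) (h₁₂ : σ₁ ≤ σ₂) :
    ∫ z, |Phi z σ₂ - Phi z σ₁| ≤ 2 * √((σ₂ - σ₁) / σ₂) := by
  have h₂ : 0 < σ₂ := h₁.trans_le h₁₂
  have hratio : σ₁ / σ₂ ≤ 1 := (div_le_one h₂).2 h₁₂
  set r := √(σ₁ / σ₂)
  have hr : r ≤ 1 := Real.sqrt_le_one.2 hratio
  have hΦ₁ : Integrable fun z => Phi z σ₁ := integrable_Phi h₁.le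
  have hΦ₂ : Integrable fun z => Phi z σ₂ := integrable_Phi h₂.le
  -- Both `Φ₂ - r Φ₁` and `(1 - r) Φ₁` are nonnegative, and their difference is `Φ₂ - Φ₁`.
  have hpointwise (z : ℝ) :
      |Phi z σ₂ - Phi z σ₁| ≤ (Phi z σ₂ - r * Phi z σ₁) + (1 - r) * Phi z σ₁ := by
    have hdiff : 0 ≤ Phi z σ₂ - r * Phi z σ₁ := sub_nonneg.2 (sqrt_div_mul_Phi_le_Phi h₁ h₁₂ z)
    have hrest : 0 ≤ (1 - r) * Phi z σ₁ := mul_nonneg (sub_nonneg.2 hr) (Phi_nonneg z σ₁)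
    rw [abs_le]
    constructor <;> linarith
  calc ∫ z, |Phi z σ₂ - Phi z σ₁|
      ≤ ∫ z, ((Phi z σ₂ - r * Phi z σ₁) + (1 - r) * Phi z σ₁) :=
        integral_mono (hΦ₂.sub hΦ₁).abs ((hΦ₂.sub (hΦ₁.const_mul r)).add (hΦ₁.const_mul (1 - r)))
          hpointwise
    _ = 2 * (1 - r) := by
        have hadd := integral_add (hΦ₂.sub (hΦ₁.const_mul r)) (hΦ₁.const_mul (1 - r))
        simp only [Pi.sub_apply] at hadd
        rw [hadd, integral_sub hΦ₂ (hΦ₁.const_mul r), integral_const_mul, integral_const_mul,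
          integral_Phi h₁, integral_Phi h₂]
        ring
    _ ≤ 2 * √((σ₂ - σ₁) / σ₂) := by
        rw [sub_div, div_self h₂.ne']
        gcongr
        exact one_sub_sqrt_le_sqrt_one_sub (by positivity) hratio

end HeatKernel

section Reflection

variable {D g : ℝ → ℝ} {M : ℝ}

lemma integral_Ioi_comp_sub_add_comp_add (hD : Integrable D) (y : ℝ) :
    ∫ ξ in Ioi (0 : ℝ), (D (y - ξ) + D (y + ξ)) = ∫ z, D z := by
  have hsub : Integrable fun ξ => D (y - ξ) := hD.comp_sub_left y
  calc ∫ ξ in Ioi (0 : ℝ), (D (y - ξ) + D (y + ξ))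
      = (∫ ξ in Ioi (0 : ℝ), D (y - ξ)) + ∫ ξ in Ioi (0 : ℝ), D (y - -ξ) := by
        simp_rw [sub_neg_eq_add]
        exact integral_add hsub.integrableOn (hD.comp_add_left y).integrableOn
    _ = (∫ ξ in Ioi (0 : ℝ), D (y - ξ)) + ∫ ξ in Iic (0 : ℝ), D (y - ξ) := by
        rw [integral_comp_neg_Ioi 0 fun ξ => D (y - ξ), neg_zero]
    _ = ∫ ξ, D (y - ξ) := by
        rw [add_comm, intervalIntegral.integral_Iic_add_Ioi hsub.integrableOn hsub.integrableOn]
    _ = ∫ z, D z := integral_sub_left_eq_self D volume y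

lemma abs_integral_mul_reflect_le (hD : Integrable D)
    (hg : ∀ᵐ ξ ∂volume.restrict (Ioi 0), |g ξ| ≤ M) (y : ℝ) :
    |∫ ξ in Ioi (0 : ℝ), g ξ * (D (y - ξ) - D (y + ξ))| ≤ M * ∫ z, |D z| := by
  have hmajorant : Integrable fun ξ => M * (|D (y - ξ)| + |D (y + ξ)|) :=
    ((hD.abs.comp_sub_left y).add (hD.abs.comp_add_left y)).const_mul M
  rw [← integral_Ioi_comp_sub_add_comp_add hD.abs y, ← integral_const_mul]
  refine norm_integral_le_of_norm_le (G := ℝ) hmajorant.integrableOn ?_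
  filter_upwards [hg] with ξ hξ
  rw [Real.norm_eq_abs, abs_mul]
  exact mul_le_mul hξ (abs_sub _ _) (abs_nonneg _) ((abs_nonneg _).trans hξ)

end Reflection

section DirichletHeat

variable {g : ℝ → ℝ} {M σ σ₁ σ₂ : ℝ}

lemma integrable_Gker (hσ : 0 ≤ σ) (y : ℝ) : Integrable fun ξ => Gker y ξ σ :=
  ((integrable_Phi hσ).comp_sub_left y).sub ((integrable_Phi hσ).comp_add_left y)

lemma measurable_Gker (y : ℝ) : Measurable fun p : ℝ × ℝ => Gker y p.1 p.2 := by
  unfold Gker Phi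
  fun_prop

lemma abs_dirichletHeat_le (hg : ∀ᵐ ξ ∂volume.restrict (Ioi 0), |g ξ| ≤ M) (hσ : 0 < σ) (y : ℝ) :
    |dirichletHeat g σ y| ≤ M := by
  calc |dirichletHeat g σ y| ≤ M * ∫ z, |Phi z σ| :=
        abs_integral_mul_reflect_le (integrable_Phi hσ.le) hg y
    _ = M := by simp_rw [abs_of_nonneg (Phi_nonneg _ _), integral_Phi hσ, mul_one]

lemma abs_dirichletHeat_sub_le (hgm : AEStronglyMeasurable g (volume.restrict (Ioi 0)))
    (hg : ∀ᵐ ξ ∂volume.restrict (Ioi 0), |g ξ| ≤ M) (h₁ : 0 < σ₁) (h₁₂ : σ₁ ≤ σ₂) (y : ℝ) :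
    |dirichletHeat g σ₂ y - dirichletHeat g σ₁ y| ≤ 2 * M * √((σ₂ - σ₁) / σ₂) := by
  have h₂ : 0 ≤ σ₂ := h₁.le.trans h₁₂
  have hM : 0 ≤ M := (abs_nonneg _).trans (abs_dirichletHeat_le hg h₁ y)
  have hint {σ : ℝ} (hσ : 0 ≤ σ) : IntegrableOn (fun ξ => g ξ * Gker y ξ σ) (Ioi 0) :=
    (integrable_Gker hσ y).integrableOn.bdd_mul hgm hg
  have hkernel : dirichletHeat g σ₂ y - dirichletHeat g σ₁ y = ∫ ξ in Ioi (0 : ℝ),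
      g ξ * ((Phi (y - ξ) σ₂ - Phi (y - ξ) σ₁) - (Phi (y + ξ) σ₂ - Phi (y + ξ) σ₁)) := by
    rw [dirichletHeat, dirichletHeat, ← integral_sub (hint h₂) (hint h₁.le)]
    congr 1 with ξ
    unfold Gker
    ring
  calc |dirichletHeat g σ₂ y - dirichletHeat g σ₁ y|
      ≤ M * ∫ z, |Phi z σ₂ - Phi z σ₁| := by
        rw [hkernel]
        exact abs_integral_mul_reflect_le ((integrable_Phi h₂).sub (integrable_Phi h₁.le)) hg y
    _ ≤ M * (2 * √((σ₂ - σ₁) / σ₂)) := by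
        gcongr
        exact integral_abs_Phi_sub_le h₁ h₁₂
    _ = 2 * M * √((σ₂ - σ₁) / σ₂) := by ring

end DirichletHeat

section TimeIntegral

variable {s t : ℝ}

lemma integrableOn_Ioc_rpow_sub_neg_half (hs : 0 ≤ s) :
    IntegrableOn (fun τ => (t - τ) ^ (-(1 / 2) : ℝ)) (Ioc 0 s) := by
  have hpow : IntervalIntegrable (fun x : ℝ => x ^ (-(1 / 2) : ℝ)) volume t (t - s) :=
    intervalIntegral.intervalIntegrable_rpow' (by norm_num)
  simpa [intervalIntegrable_iff_integrableOn_Ioc_of_le hs] using hpow.comp_sub_left t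

lemma integral_Ioc_rpow_sub_neg_half (hs : 0 ≤ s) :
    ∫ τ in Ioc 0 s, (t - τ) ^ (-(1 / 2) : ℝ) = 2 * (√t - √(t - s)) := by
  rw [← intervalIntegral.integral_of_le hs,
    intervalIntegral.integral_comp_sub_left (fun x => x ^ (-(1 / 2) : ℝ)) t,
    integral_rpow (.inl (by norm_num)), Real.sqrt_eq_rpow, Real.sqrt_eq_rpow]
  norm_num
  ring

end TimeIntegral

section Duhamel

variable {a M s t : ℝ} {f : ℝ × ℝ → ℝ}

lemma ae_abs_dirichletHeat_le (ha : 0 < a)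
    (hM : ∀ᵐ p ∂volume.restrict (Ioc 0 t ×ˢ Ioi 0), |f p| ≤ M) (y : ℝ) :
    ∀ᵐ τ ∂volume.restrict (Ioc 0 t),
      |dirichletHeat (fun ξ => f (τ, ξ)) (a * (t - τ)) y| ≤ M := by
  rw [Measure.volume_eq_prod, ← Measure.prod_restrict, ← restrict_Ioo_eq_restrict_Ioc] at hM
  rw [← restrict_Ioo_eq_restrict_Ioc]
  filter_upwards [Measure.ae_ae_of_ae_prod hM, ae_restrict_mem measurableSet_Ioo] with τ hMτ hτ
  exact abs_dirichletHeat_le hMτ (mul_pos ha (sub_pos.2 hτ.2)) y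

lemma ae_abs_dirichletHeat_sub_le (ha : 0 < a) (hst : s ≤ t)
    (hf : AEStronglyMeasurable f (volume.restrict (Ioc 0 s ×ˢ Ioi 0)))
    (hM : ∀ᵐ p ∂volume.restrict (Ioc 0 s ×ˢ Ioi 0), |f p| ≤ M) (y : ℝ) :
    ∀ᵐ τ ∂volume.restrict (Ioc 0 s),
      |dirichletHeat (fun ξ => f (τ, ξ)) (a * (t - τ)) y -
          dirichletHeat (fun ξ => f (τ, ξ)) (a * (s - τ)) y| ≤
        2 * M * √(t - s) * (t - τ) ^ (-(1 / 2) : ℝ) := by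
  rw [Measure.volume_eq_prod, ← Measure.prod_restrict, ← restrict_Ioo_eq_restrict_Ioc] at hf hM
  rw [← restrict_Ioo_eq_restrict_Ioc]
  filter_upwards [hf.prodMk_left, Measure.ae_ae_of_ae_prod hM, ae_restrict_mem measurableSet_Ioo]
    with τ hfτ hMτ hτ
  have hsτ : 0 < s - τ := sub_pos.2 hτ.2
  have htτ : 0 < t - τ := by linarith
  have hrel : (a * (t - τ) - a * (s - τ)) / (a * (t - τ)) = (t - s) / (t - τ) := by
    field_simp
    ring
  have hbound := abs_dirichletHeat_sub_le hfτ hMτ (mul_pos ha hsτ)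
    (by gcongr : a * (s - τ) ≤ a * (t - τ)) y
  rwa [hrel, Real.sqrt_div (sub_nonneg.2 hst), div_eq_mul_inv, ← mul_assoc,
    Real.sqrt_eq_rpow (t - τ), ← Real.rpow_neg htτ.le] at hbound

lemma integrableOn_dirichletHeat (ha : 0 < a)
    (hf : AEStronglyMeasurable f (volume.restrict (Ioc 0 t ×ˢ Ioi 0)))
    (hM : ∀ᵐ p ∂volume.restrict (Ioc 0 t ×ˢ Ioi 0), |f p| ≤ M) (y : ℝ) :
    IntegrableOn (fun τ => dirichletHeat (fun ξ => f (τ, ξ)) (a * (t - τ)) y) (Ioc 0 t) := by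
  refine Integrable.of_bound ?_ M (ae_abs_dirichletHeat_le ha hM y)
  have hkernel : Measurable fun p : ℝ × ℝ => Gker y p.2 (a * (t - p.1)) :=
    (measurable_Gker y).comp (by fun_prop : Measurable fun p : ℝ × ℝ => (p.2, a * (t - p.1)))
  rw [Measure.volume_eq_prod, ← Measure.prod_restrict] at hf
  exact (hf.mul hkernel.aestronglyMeasurable).integral_prod_right'

lemma duhamel_sub_duhamel (ha : 0 < a) (hs : 0 ≤ s) (hst : s ≤ t)
    (hf : AEStronglyMeasurable f (volume.restrict (Ioc 0 t ×ˢ Ioi 0)))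
    (hM : ∀ᵐ p ∂volume.restrict (Ioc 0 t ×ˢ Ioi 0), |f p| ≤ M) (y : ℝ) :
    duhamel a f t y - duhamel a f s y =
      (∫ τ in Ioc 0 s, (dirichletHeat (fun ξ => f (τ, ξ)) (a * (t - τ)) y -
          dirichletHeat (fun ξ => f (τ, ξ)) (a * (s - τ)) y)) +
        ∫ τ in Ioc s t, dirichletHeat (fun ξ => f (τ, ξ)) (a * (t - τ)) y := by
  have hsub : Ioc 0 s ⊆ Ioc 0 t := Ioc_subset_Ioc_right hst
  have hprod : Ioc 0 s ×ˢ Ioi (0 : ℝ) ⊆ Ioc 0 t ×ˢ Ioi 0 := prod_mono_left hsub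
  have ht_int := integrableOn_dirichletHeat ha hf hM y
  have hs_int := integrableOn_dirichletHeat ha (hf.mono_set hprod)
    (ae_restrict_of_ae_restrict_of_subset hprod hM) y
  rw [duhamel, duhamel, integral_sub (ht_int.mono_set hsub) hs_int,
    ← Ioc_union_Ioc_eq_Ioc hs hst, setIntegral_union (Ioc_disjoint_Ioc_of_le le_rfl)
      measurableSet_Ioc (ht_int.mono_set hsub) (ht_int.mono_set (Ioc_subset_Ioc_left hs))]
  ring

lemma abs_duhamel_sub_le (ha : 0 < a) (hs : 0 ≤ s) (hst : s ≤ t)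
    (hf : AEStronglyMeasurable f (volume.restrict (Ioc 0 t ×ˢ Ioi 0)))
    (hM : ∀ᵐ p ∂volume.restrict (Ioc 0 t ×ˢ Ioi 0), |f p| ≤ M) (y : ℝ) :
    |duhamel a f t y - duhamel a f s y| ≤
      M * (4 * √(t - s) * (√t - √(t - s)) + (t - s)) := by
  have hprod : Ioc 0 s ×ˢ Ioi (0 : ℝ) ⊆ Ioc 0 t ×ˢ Ioi 0 :=
    prod_mono_left (Ioc_subset_Ioc_right hst)
  have hbefore : |∫ τ in Ioc 0 s, (dirichletHeat (fun ξ => f (τ, ξ)) (a * (t - τ)) y -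
      dirichletHeat (fun ξ => f (τ, ξ)) (a * (s - τ)) y)| ≤
        2 * M * √(t - s) * (2 * (√t - √(t - s))) := by
    rw [← integral_Ioc_rpow_sub_neg_half hs, ← integral_const_mul]
    refine norm_integral_le_of_norm_le (G := ℝ)
      ((integrableOn_Ioc_rpow_sub_neg_half hs).const_mul _) ?_
    exact ae_abs_dirichletHeat_sub_le ha hst (hf.mono_set hprod)
      (ae_restrict_of_ae_restrict_of_subset hprod hM) y
  have hafter : |∫ τ in Ioc s t, dirichletHeat (fun ξ => f (τ, ξ)) (a * (t - τ)) y| ≤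
      M * (t - s) := by
    rw [← Real.volume_real_Ioc_of_le hst]
    refine norm_setIntegral_le_of_norm_le_const_ae (E := ℝ) measure_Ioc_lt_top ?_
    exact ae_restrict_of_ae_restrict_of_subset (Ioc_subset_Ioc_left hs)
      (ae_abs_dirichletHeat_le ha hM y)
  rw [duhamel_sub_duhamel ha hs hst hf hM]
  refine (abs_add_le _ _).trans ((add_le_add hbefore hafter).trans_eq ?_)
  ring

end Duhamel

theorem stmt13_general {a T M : ℝ} (ha : 0 < a) {f : ℝ × ℝ → ℝ}
    (hf : AEStronglyMeasurable f (volume.restrict (Ioc 0 T ×ˢ Ioi 0)))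
    (hM : ∀ᵐ p ∂volume.restrict (Ioc 0 T ×ˢ Ioi 0), |f p| ≤ M)
    {s t : ℝ} (hs : 0 ≤ s) (hst : s < t) (ht : t ≤ T) (y : ℝ) :
    |duhamel a f t y - duhamel a f s y| ≤ 4 * √T * M * |t - s| ^ ((1 : ℝ) / 2) := by
  have hprod : Ioc 0 t ×ˢ Ioi (0 : ℝ) ⊆ Ioc 0 T ×ˢ Ioi 0 :=
    prod_mono_left (Ioc_subset_Ioc_right ht)
  have hts : 0 < t - s := sub_pos.2 hst
  have hsqrt : 0 ≤ √t - √(t - s) := sub_nonneg.2 (Real.sqrt_le_sqrt (sub_le_self t hs))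
  have hbound := abs_duhamel_sub_le ha hs hst.le (hf.mono_set hprod)
    (ae_restrict_of_ae_restrict_of_subset hprod hM) y
  have hM₀ : 0 ≤ M := nonneg_of_mul_nonneg_left ((abs_nonneg _).trans hbound) (by positivity)
  rw [abs_of_pos hts, ← Real.sqrt_eq_rpow]
  calc |duhamel a f t y - duhamel a f s y|
      ≤ M * (4 * √(t - s) * (√t - √(t - s)) + (t - s)) := hbound
    _ = M * (4 * √t * √(t - s) - 3 * (t - s)) := by
        linear_combination -4 * M * Real.mul_self_sqrt hts.le
    _ ≤ M * (4 * √T * √(t - s)) := by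
        gcongr
        exact (sub_le_self _ (by positivity)).trans (by gcongr)
    _ = 4 * √T * M * √(t - s) := by ring

theorem stmt13 (a tstar : ℝ) (ha : 0 < a) (htstar : 0 < tstar) :
    ∃ C > (0 : ℝ), ∀ (f : ℝ × ℝ → ℝ) (M : ℝ),
      ContinuousOn f (Set.Icc 0 tstar ×ˢ Set.Ici 0) →
      (∀ p ∈ Set.Icc (0:ℝ) tstar ×ˢ Set.Ici (0:ℝ), |f p| ≤ M) →
      ∀ s t y : ℝ, 0 < s → s < t → t ≤ tstar → 0 ≤ y →
        |(∫ τ in Set.Ioc (0 : ℝ) t, ∫ ξ in Set.Ioi (0 : ℝ), f (τ, ξ) * Gker y ξ (a * (t - τ))) -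
            ∫ τ in Set.Ioc (0 : ℝ) s, ∫ ξ in Set.Ioi (0 : ℝ), f (τ, ξ) * Gker y ξ (a * (s - τ))|
          ≤ C * M * |t - s| ^ ((1 : ℝ) / 2) := by
  have hinterior : Ioc 0 tstar ×ˢ Ioi (0 : ℝ) ⊆ Icc 0 tstar ×ˢ Ici 0 :=
    prod_mono Ioc_subset_Icc_self Ioi_subset_Ici_self
  have hmeas : MeasurableSet (Ioc 0 tstar ×ˢ Ioi (0 : ℝ)) :=
    measurableSet_Ioc.prod measurableSet_Ioi
  exact ⟨4 * √tstar, by positivity, fun f M hf hM s t y hs hst ht _ =>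
    stmt13_general ha ((hf.mono hinterior).aestronglyMeasurable hmeas)
      (ae_restrict_of_forall_mem hmeas fun p hp => hM p (hinterior hp)) hs.le hst ht y⟩
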